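/- Let N₁ : ℝ → ℝ satisfy N₁(G) ≥ 2 for all large G and ∫₂^{N₁(G)} (−P(t)) dt = a·G + O(1) as G → ∞. Let g : ℝ → ℝ satisfy (i) g(T) − T ∼ (1−c)·T/ln T as T → ∞, and (ii) for every fixed l > 0, ∫_{g(T)}^{g(T+2l)} |ζ(1/2+it)|² dt = (1+o(1))·2l·ln T as T → ∞. Then the following two statements are equivalent: (A) for all positive integers x, y, z and every integer n ≥ 3, writing F = (xⁿ + yⁿ)/zⁿ, one has lim_{τ→∞} (1/τ)·{ [∫_{N₁(Fτ)}^{N₁(g(Fτ))} (−P(t)) dt] · [∫_{g(Fτ)}^{g(Fτ + 1/(a(1−c)))} |ζ(1/2+it)|² dt] } ≠ 1; (B) for all positive integers x, y, z and every integer n ≥ 3, xⁿ + yⁿ ≠ zⁿ (the Fermat–Wiles theorem). -/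

import Mathlib

open Filter Real Asymptotics MeasureTheory

noncomputable def pichar (t : ℝ) : ℝ := (Nat.primeCounting ⌊t⌋₊ : ℝ)

noncomputable def P (t : ℝ) : ℝ := pichar t - ∫ u in (2:ℝ)..t, 1 / Real.log u

noncomputable def a : ℝ := Real.exp 4.5

noncomputable def c : ℝ := Real.eulerMascheroniConstant

noncomputable def Z (t : ℝ) : ℝ := ‖riemannZeta (1/2 + (t : ℂ) * Complex.I)‖ ^ 2

/-!
Put `F = (xⁿ + yⁿ) / zⁿ`. The primitive of `-P` at `N₁ G` is `a G + O(1)`, so its increment from `T`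
to `g T` is `a (g T - T) + O(1) ∼ a (1 - c) T / log T`. The second integral is asymptotic to
`log T / (a (1 - c))`: its length `1 / (a (1 - c))` is chosen so that the product of both is
asymptotic to `T`. At `T = F τ`, after division by `τ`, the limit thus exists and equals `F`, which
is `1` exactly when `xⁿ + yⁿ = zⁿ`.
-/

lemma isLittleO_id_div_log_id : (fun T : ℝ => T / log T) =o[atTop] (fun T => T) := by
  have hlog : (fun T : ℝ => (log T)⁻¹) =o[atTop] (fun _ => (1 : ℝ)) :=
    (isLittleO_one_iff ℝ).2 tendsto_log_atTop.inv_tendsto_atTop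
  simpa only [div_eq_mul_inv, mul_one] using
    (isBigO_refl (fun T : ℝ => T) atTop).mul_isLittleO hlog

lemma isLittleO_one_id_div_log :
    (fun _ : ℝ => (1 : ℝ)) =o[atTop] (fun T : ℝ => T / log T) := by
  have h := (isBigO_refl (fun T : ℝ => (log T)⁻¹) atTop).mul_isLittleO isLittleO_log_id_atTop
  refine h.congr' ?_ (.of_forall fun T => (div_eq_inv_mul T _).symm)
  filter_upwards [eventually_gt_atTop 1] with T hT
  exact inv_mul_cancel₀ (log_pos hT).ne'

lemma tendsto_atTop_of_sub_isLittleO {g : ℝ → ℝ} (hg : (fun T => g T - T) =o[atTop] (fun T => T)) :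
    Tendsto g atTop atTop :=
  (IsLittleO.isEquivalent hg).symm.tendsto_atTop tendsto_id

lemma isEquivalent_sub_of_isBigO_sub_mul {Φ g h : ℝ → ℝ} {A : ℝ} (hA : A ≠ 0)
    (hΦ : (fun G => Φ G - A * G) =O[atTop] (fun _ => (1 : ℝ)))
    (hg : Tendsto g atTop atTop) (hgh : (fun T => g T - T) ~[atTop] h)
    (hh : (fun _ => (1 : ℝ)) =o[atTop] h) :
    (fun T => Φ (g T) - Φ T) ~[atTop] (fun T => A * h T) := by
  have hmain : (fun T => A * (g T - T)) ~[atTop] (fun T => A * h T) :=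
    (IsEquivalent.refl (u := fun _ : ℝ => A)).mul hgh
  have herr : (fun T => (Φ (g T) - A * g T) - (Φ T - A * T)) =o[atTop] (fun T => A * h T) :=
    ((hΦ.comp_tendsto hg).sub hΦ).trans_isLittleO (hh.const_mul_right hA)
  refine (hmain.add_isLittleO herr).congr_left (.of_forall fun T => ?_)
  simp only [Pi.add_apply]
  ring

lemma isEquivalent_integral_comp {f N g h : ℝ → ℝ} {x₀ A : ℝ} (hA : A ≠ 0)
    (hf : ∀ᶠ G in atTop, IntervalIntegrable f volume x₀ (N G))
    (hN : (fun G => (∫ t in x₀..N G, f t) - A * G) =O[atTop] (fun _ => (1 : ℝ)))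
    (hg : Tendsto g atTop atTop) (hgh : (fun T => g T - T) ~[atTop] h)
    (hh : (fun _ => (1 : ℝ)) =o[atTop] h) :
    (fun T => ∫ t in N T..N (g T), f t) ~[atTop] (fun T => A * h T) := by
  refine (isEquivalent_sub_of_isBigO_sub_mul hA hN hg hgh hh).congr_left ?_
  filter_upwards [hf, hg.eventually hf] with T hT hgT
  exact intervalIntegral.integral_interval_sub_left hgT hT

lemma integral_mul_isEquivalent_id {f N g v : ℝ → ℝ} {x₀ A κ : ℝ} (hA : A ≠ 0) (hκ : κ ≠ 0)
    (hf : ∀ᶠ G in atTop, IntervalIntegrable f volume x₀ (N G))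
    (hN : (fun G => (∫ t in x₀..N G, f t) - A * G) =O[atTop] (fun _ => (1 : ℝ)))
    (hg : (fun T => g T - T) ~[atTop] (fun T => κ * T / log T))
    (hv : v ~[atTop] (fun T => 1 / (A * κ) * log T)) :
    (fun T => (∫ t in N T..N (g T), f t) * v T) ~[atTop] id := by
  have hκ_small : (fun T => κ * T / log T) =o[atTop] (fun T => T) := by
    simpa only [mul_div_assoc] using isLittleO_id_div_log_id.const_mul_left κ
  have hκ_large : (fun _ => (1 : ℝ)) =o[atTop] (fun T => κ * T / log T) := by
    simpa only [mul_div_assoc] using isLittleO_one_id_div_log.const_mul_right hκ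
  have hg_atTop : Tendsto g atTop atTop :=
    tendsto_atTop_of_sub_isLittleO (hg.isBigO.trans_isLittleO hκ_small)
  refine ((isEquivalent_integral_comp hA hf hN hg_atTop hg hκ_large).mul hv).congr_right ?_
  filter_upwards [eventually_gt_atTop 1] with T hT
  have hlog : log T ≠ 0 := (log_pos hT).ne'
  simp only [Pi.mul_apply, id]
  field_simp

lemma tendsto_one_div_mul_comp_const_mul {u : ℝ → ℝ} (hu : u ~[atTop] id) {F : ℝ} (hF : 0 < F) :
    Tendsto (fun τ => (1 / τ) * u (F * τ)) atTop (nhds F) := by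
  have huF : (fun τ => u (F * τ)) ~[atTop] (fun τ => F * τ) :=
    hu.comp_tendsto (tendsto_id.const_mul_atTop hF)
  refine (((IsEquivalent.refl (u := fun τ : ℝ => 1 / τ)).mul huF).congr_right ?_).tendsto_const
  filter_upwards [eventually_ne_atTop 0] with τ hτ
  simp only [Pi.mul_apply, Function.const_apply]
  field_simp

lemma continuousOn_integral_one_div_log {x₀ : ℝ} (hx₀ : 1 < x₀) :
    ContinuousOn (fun t => ∫ u in x₀..t, 1 / log u) (Set.Ioi 1) := by
  have hcont : ContinuousOn (fun u : ℝ => 1 / log u) (Set.Ioi 1) := fun u hu =>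
    (continuousAt_const.div (continuousAt_log (zero_lt_one.trans hu).ne')
      (log_pos hu).ne').continuousWithinAt
  intro t ht
  have hint : IntervalIntegrable (fun u : ℝ => 1 / log u) volume x₀ t :=
    (hcont.mono (Set.ordConnected_Ioi.uIcc_subset hx₀ ht)).intervalIntegrable
  exact (intervalIntegral.integral_hasDerivAt_right hint
    (hcont.stronglyMeasurableAtFilter isOpen_Ioi t ht)
    (hcont.continuousAt (Ioi_mem_nhds ht))).continuousAt.continuousWithinAt

lemma monotone_pichar : Monotone pichar := fun _ _ h =>
  Nat.cast_le.2 (Nat.monotone_primeCounting (Nat.floor_mono h))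

lemma intervalIntegrable_P {x y : ℝ} (hx : 1 < x) (hy : 1 < y) :
    IntervalIntegrable P volume x y :=
  monotone_pichar.intervalIntegrable.sub
    ((continuousOn_integral_one_div_log one_lt_two).mono
      (Set.ordConnected_Ioi.uIcc_subset hx hy)).intervalIntegrable

lemma a_pos : 0 < a := exp_pos _

lemma one_sub_c_pos : 0 < 1 - c :=
  sub_pos.2 (eulerMascheroniConstant_lt_two_thirds.trans (by norm_num))

theorem stmt_9_general {f w N g : ℝ → ℝ} {x₀ A κ : ℝ} (hA : A ≠ 0) (hκ : κ ≠ 0)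
    (hf : ∀ᶠ G in atTop, IntervalIntegrable f volume x₀ (N G))
    (hN : (fun G => (∫ t in x₀..N G, f t) - A * G) =O[atTop] (fun _ => (1 : ℝ)))
    (hg : (fun T => g T - T) ~[atTop] (fun T => κ * T / log T))
    (hw : (fun T => ∫ t in g T..g (T + 1 / (A * κ)), w t) ~[atTop]
      (fun T => 1 / (A * κ) * log T))
    {x y z : ℝ} (hx : 0 < x) (hy : 0 < y) (hz : 0 < z) (n : ℕ) :
    Tendsto (fun τ => (1 / τ) *
        ((∫ t in N ((x ^ n + y ^ n) / z ^ n * τ)..N (g ((x ^ n + y ^ n) / z ^ n * τ)), f t) *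
          ∫ t in g ((x ^ n + y ^ n) / z ^ n * τ)..
            g ((x ^ n + y ^ n) / z ^ n * τ + 1 / (A * κ)), w t))
      atTop (nhds 1) ↔ x ^ n + y ^ n = z ^ n := by
  have hF : 0 < (x ^ n + y ^ n) / z ^ n := by positivity
  have hlim := tendsto_one_div_mul_comp_const_mul
    (integral_mul_isEquivalent_id hA hκ hf hN hg hw) hF
  rw [← div_eq_one_iff_eq (pow_pos hz n).ne']
  exact ⟨tendsto_nhds_unique hlim, fun hF_eq => by simpa only [hF_eq] using hlim⟩

/-- Theorem 3: the first `Pζ`-condition on the set of all Fermat rationals is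
equivalent to the Fermat–Wiles theorem. -/
theorem stmt_9 (N₁ : ℝ → ℝ)
    (hN2 : ∀ᶠ G in atTop, 2 ≤ N₁ G)
    (hN : (fun G => (∫ t in (2:ℝ)..N₁ G, -P t) - a * G) =O[atTop] (fun _ => (1:ℝ)))
    (g : ℝ → ℝ)
    (hg1 : (fun T => g T - T) ~[atTop] (fun T => (1 - c) * T / Real.log T))
    (hg2 : ∀ l : ℝ, 0 < l →
      (fun T => ∫ t in g T..g (T + 2 * l), Z t) ~[atTop] (fun T => 2 * l * Real.log T)) :
    (∀ x y z n : ℕ, 0 < x → 0 < y → 0 < z → 3 ≤ n →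
      ¬ Tendsto (fun τ => (1 / τ) *
        ((∫ t in N₁ (((x ^ n + y ^ n : ℝ) / (z ^ n : ℝ)) * τ)..
            N₁ (g (((x ^ n + y ^ n : ℝ) / (z ^ n : ℝ)) * τ)), -P t) *
          ∫ t in g (((x ^ n + y ^ n : ℝ) / (z ^ n : ℝ)) * τ)..
            g (((x ^ n + y ^ n : ℝ) / (z ^ n : ℝ)) * τ + 1 / (a * (1 - c))), Z t))
        atTop (nhds 1)) ↔
    (∀ x y z n : ℕ, 0 < x → 0 < y → 0 < z → 3 ≤ n → x ^ n + y ^ n ≠ z ^ n) := by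
  have hP : ∀ᶠ G in atTop, IntervalIntegrable (fun t => -P t) volume 2 (N₁ G) :=
    hN2.mono fun G hG => (intervalIntegrable_P one_lt_two (one_lt_two.trans_le hG)).neg
  have hδ : 0 < 1 / (a * (1 - c)) / 2 :=
    half_pos (one_div_pos.2 (mul_pos a_pos one_sub_c_pos))
  have hZ := hg2 _ hδ
  rw [mul_div_cancel₀ _ (two_ne_zero' ℝ)] at hZ
  refine forall₄_congr fun x y z n => forall₄_congr fun hx hy hz _ => not_congr ?_
  rw [stmt_9_general a_pos.ne' one_sub_c_pos.ne' hP hN hg1 hZ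
    (Nat.cast_pos.2 hx) (Nat.cast_pos.2 hy) (Nat.cast_pos.2 hz) n]
  exact_mod_cast Iff.rfl
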